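/- arXiv:2411.01413 — 8 statements merged into one kernel-verified Lean document; each statement's English description precedes it below -/
import Mathlib

section
/- Let R : g → g be a Rota-Baxter operator of weight zero on a BiHom-associative color algebra (g, μ, ε, α, β). Then the even bilinear map μ_R(x,y) = μ(R(x),y) + μ(x,R(y)) defines a BiHom-associative color algebra structure (g, μ_R, ε, α, β) on g. -/
/-- A skew-symmetric bicharacter (commutation factor) on an abelian group `Γ`
with values in `K \ {0}` (nonvanishing is a consequence of `skew`). -/
structure Bicharacter (K : Type*) (Γ : Type*) [Field K] [AddCommGroup Γ] where
  ε : Γ → Γ → K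
  skew : ∀ a b, ε a b * ε b a = 1
  add_right : ∀ a b c, ε a (b + c) = ε a b * ε a c
  add_left : ∀ a b c, ε (a + b) c = ε a c * ε b c

variable {K : Type*} [Field K] {Γ : Type*} [AddCommGroup Γ]
variable {g : Type*} [AddCommGroup g] [Module K g]
variable {V : Type*} [AddCommGroup V] [Module K V]

/-- A (multiplicative) BiHom-associative color algebra structure on a `Γ`-graded
vector space, all identities being required on homogeneous elements. -/
structure IsBiHomAssocColor (𝒜 : Γ → Submodule K g) (χ : Bicharacter K Γ)
    (μ : g →ₗ[K] g →ₗ[K] g) (α β : g →ₗ[K] g) : Prop where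
  mu_even : ∀ a b, ∀ x ∈ 𝒜 a, ∀ y ∈ 𝒜 b, μ x y ∈ 𝒜 (a + b)
  alpha_even : ∀ a, ∀ x ∈ 𝒜 a, α x ∈ 𝒜 a
  beta_even : ∀ a, ∀ x ∈ 𝒜 a, β x ∈ 𝒜 a
  comm : ∀ x, α (β x) = β (α x)
  mult_alpha : ∀ a b, ∀ x ∈ 𝒜 a, ∀ y ∈ 𝒜 b, μ (α x) (α y) = α (μ x y)
  mult_beta : ∀ a b, ∀ x ∈ 𝒜 a, ∀ y ∈ 𝒜 b, μ (β x) (β y) = β (μ x y)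
  assoc : ∀ a b c, ∀ x ∈ 𝒜 a, ∀ y ∈ 𝒜 b, ∀ z ∈ 𝒜 c,
    μ (α x) (μ y z) = μ (μ x y) (β z)

/-- A bimodule (representation) of a BiHom-associative color algebra. -/
structure IsAssocColorBimodule (𝒜 : Γ → Submodule K g) (𝒱 : Γ → Submodule K V)
    (χ : Bicharacter K Γ) (μ : g →ₗ[K] g →ₗ[K] g) (α β : g →ₗ[K] g)
    (l r : g →ₗ[K] V →ₗ[K] V) (αV βV : V →ₗ[K] V) : Prop where
  l_even : ∀ a b, ∀ x ∈ 𝒜 a, ∀ v ∈ 𝒱 b, l x v ∈ 𝒱 (a + b)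
  r_even : ∀ a b, ∀ x ∈ 𝒜 a, ∀ v ∈ 𝒱 b, r x v ∈ 𝒱 (a + b)
  alphaV_even : ∀ a, ∀ v ∈ 𝒱 a, αV v ∈ 𝒱 a
  betaV_even : ∀ a, ∀ v ∈ 𝒱 a, βV v ∈ 𝒱 a
  commV : ∀ v, αV (βV v) = βV (αV v)
  alphaV_l : ∀ a b, ∀ x ∈ 𝒜 a, ∀ v ∈ 𝒱 b, αV (l x v) = l (α x) (αV v)
  betaV_l : ∀ a b, ∀ x ∈ 𝒜 a, ∀ v ∈ 𝒱 b, βV (l x v) = l (β x) (βV v)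
  alphaV_r : ∀ a b, ∀ x ∈ 𝒜 a, ∀ v ∈ 𝒱 b, αV (r x v) = r (α x) (αV v)
  betaV_r : ∀ a b, ∀ x ∈ 𝒜 a, ∀ v ∈ 𝒱 b, βV (r x v) = r (β x) (βV v)
  l_mu : ∀ a b c, ∀ x ∈ 𝒜 a, ∀ y ∈ 𝒜 b, ∀ v ∈ 𝒱 c,
    l (α x) (l y v) = l (μ x y) (βV v)
  l_r : ∀ a b c, ∀ x ∈ 𝒜 a, ∀ y ∈ 𝒜 b, ∀ v ∈ 𝒱 c,
    l (α x) (r y v) = χ.ε a b • r (β y) (l x v)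
  r_mu : ∀ a b c, ∀ x ∈ 𝒜 a, ∀ y ∈ 𝒜 b, ∀ v ∈ 𝒱 c,
    r (μ x y) (αV v) = χ.ε a b • r (β y) (r x v)

/-- A 3-BiHom-Lie color algebra structure. -/
structure Is3BiHomLieColor (𝒜 : Γ → Submodule K g) (χ : Bicharacter K Γ)
    (m : g →ₗ[K] g →ₗ[K] g →ₗ[K] g) (α β : g →ₗ[K] g) : Prop where
  bracket_even : ∀ a b c, ∀ x ∈ 𝒜 a, ∀ y ∈ 𝒜 b, ∀ z ∈ 𝒜 c, m x y z ∈ 𝒜 (a + b + c)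
  alpha_even : ∀ a, ∀ x ∈ 𝒜 a, α x ∈ 𝒜 a
  beta_even : ∀ a, ∀ x ∈ 𝒜 a, β x ∈ 𝒜 a
  skew1 : ∀ a b c, ∀ x ∈ 𝒜 a, ∀ y ∈ 𝒜 b, ∀ z ∈ 𝒜 c,
    m (β x) (β y) (α z) = -(χ.ε a b • m (β y) (β x) (α z))
  skew2 : ∀ a b c, ∀ x ∈ 𝒜 a, ∀ y ∈ 𝒜 b, ∀ z ∈ 𝒜 c,
    m (β x) (β y) (α z) = -(χ.ε b c • m (β x) (β z) (α y))
  jacobi : ∀ a b c d e, ∀ x ∈ 𝒜 a, ∀ y ∈ 𝒜 b, ∀ z ∈ 𝒜 c, ∀ u ∈ 𝒜 d, ∀ v ∈ 𝒜 e,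
    m (β (β x)) (β (β y)) (m (β z) (β u) (α v))
      = χ.ε (a + b + c) (d + e) • m (β (β u)) (β (β v)) (m (β x) (β y) (α z))
        - (χ.ε (a + b) (c + e) * χ.ε d e) • m (β (β z)) (β (β v)) (m (β x) (β y) (α u))
        + χ.ε (a + b) (c + d) • m (β (β z)) (β (β u)) (m (β x) (β y) (α v))

/-- A multiplicative 3-BiHom-Lie color algebra structure. -/
structure IsMult3BiHomLieColor (𝒜 : Γ → Submodule K g) (χ : Bicharacter K Γ)
    (m : g →ₗ[K] g →ₗ[K] g →ₗ[K] g) (α β : g →ₗ[K] g)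
    extends Is3BiHomLieColor 𝒜 χ m α β : Prop where
  comm : ∀ x, α (β x) = β (α x)
  mult_alpha : ∀ a b c, ∀ x ∈ 𝒜 a, ∀ y ∈ 𝒜 b, ∀ z ∈ 𝒜 c,
    α (m x y z) = m (α x) (α y) (α z)
  mult_beta : ∀ a b c, ∀ x ∈ 𝒜 a, ∀ y ∈ 𝒜 b, ∀ z ∈ 𝒜 c,
    β (m x y z) = m (β x) (β y) (β z)

/-- A 3-Lie color algebra structure (`α = β = id` case), with the
ε-fundamental identity. -/
structure Is3LieColor (𝒜 : Γ → Submodule K g) (χ : Bicharacter K Γ)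
    (m : g →ₗ[K] g →ₗ[K] g →ₗ[K] g) : Prop where
  bracket_even : ∀ a b c, ∀ x ∈ 𝒜 a, ∀ y ∈ 𝒜 b, ∀ z ∈ 𝒜 c, m x y z ∈ 𝒜 (a + b + c)
  skew1 : ∀ a b c, ∀ x ∈ 𝒜 a, ∀ y ∈ 𝒜 b, ∀ z ∈ 𝒜 c,
    m x y z = -(χ.ε a b • m y x z)
  skew2 : ∀ a b c, ∀ x ∈ 𝒜 a, ∀ y ∈ 𝒜 b, ∀ z ∈ 𝒜 c,
    m x y z = -(χ.ε b c • m x z y)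
  fund : ∀ a b c d e, ∀ x ∈ 𝒜 a, ∀ y ∈ 𝒜 b, ∀ z ∈ 𝒜 c, ∀ t ∈ 𝒜 d, ∀ u ∈ 𝒜 e,
    m x y (m z t u)
      = m (m x y z) t u + χ.ε (a + b) c • m z (m x y t) u
        + χ.ε (a + b) (c + d) • m z t (m x y u)

/-- A representation of a 3-BiHom-Lie color algebra on a graded vector space `V`. -/
structure Is3BiHomLieRep (𝒜 : Γ → Submodule K g) (𝒱 : Γ → Submodule K V)
    (χ : Bicharacter K Γ) (m : g →ₗ[K] g →ₗ[K] g →ₗ[K] g) (α β : g →ₗ[K] g)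
    (ρ : g →ₗ[K] g →ₗ[K] V →ₗ[K] V) (αV βV : V →ₗ[K] V) : Prop where
  commV : ∀ v, αV (βV v) = βV (αV v)
  rho_even : ∀ a b c, ∀ x ∈ 𝒜 a, ∀ y ∈ 𝒜 b, ∀ v ∈ 𝒱 c, ρ x y v ∈ 𝒱 (a + b + c)
  alphaV_even : ∀ a, ∀ v ∈ 𝒱 a, αV v ∈ 𝒱 a
  betaV_even : ∀ a, ∀ v ∈ 𝒱 a, βV v ∈ 𝒱 a
  rho_skew : ∀ a b, ∀ x ∈ 𝒜 a, ∀ y ∈ 𝒜 b, ρ x y = -(χ.ε a b • ρ y x)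
  cond1 : ∀ a b, ∀ u ∈ 𝒜 a, ∀ v ∈ 𝒜 b,
    ρ (α u) (α v) ∘ₗ αV = αV ∘ₗ ρ u v
  cond2 : ∀ a b, ∀ u ∈ 𝒜 a, ∀ v ∈ 𝒜 b,
    ρ (β u) (β v) ∘ₗ βV = βV ∘ₗ ρ u v
  cond3 : ∀ a b c d, ∀ u ∈ 𝒜 a, ∀ v ∈ 𝒜 b, ∀ x ∈ 𝒜 c, ∀ y ∈ 𝒜 d,
    ρ (α (β u)) (α (β v)) ∘ₗ ρ x y
      = χ.ε (c + d) (a + b) • (ρ (β x) (β y) ∘ₗ ρ (α u) (α v))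
        + ρ (m (β u) (β v) x) (β y) ∘ₗ βV
        + χ.ε c (a + b) • (ρ (β x) (m (β u) (β v) y) ∘ₗ βV)
  cond4 : ∀ a b c d, ∀ u ∈ 𝒜 a, ∀ v ∈ 𝒜 b, ∀ x ∈ 𝒜 c, ∀ y ∈ 𝒜 d,
    ρ (m (β u) (β v) x) (β y) ∘ₗ βV
      = χ.ε a (c + b) • (ρ (α (β v)) (β x) ∘ₗ ρ (α u) y)
        + χ.ε c (a + b) • (ρ (β x) (α (β u)) ∘ₗ ρ (α v) y)
        + ρ (α (β u)) (α (β v)) ∘ₗ ρ x y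

/-- A noncommutative 3-BiHom-Poisson color algebra structure. -/
structure IsNC3BiHomPoissonColor (𝒜 : Γ → Submodule K g) (χ : Bicharacter K Γ)
    (m : g →ₗ[K] g →ₗ[K] g →ₗ[K] g) (μ : g →ₗ[K] g →ₗ[K] g)
    (α β : g →ₗ[K] g) : Prop where
  assoc : IsBiHomAssocColor 𝒜 χ μ α β
  lie : Is3BiHomLieColor 𝒜 χ m α β
  leibniz : ∀ a b c d, ∀ x ∈ 𝒜 a, ∀ y ∈ 𝒜 b, ∀ z ∈ 𝒜 c, ∀ t ∈ 𝒜 d,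
    m (α (β x)) (α (β y)) (μ z t)
      = μ (m (β x) (β y) z) (β t) + χ.ε (a + b) c • μ (β z) (m (α x) (α y) t)

/-- A representation of a noncommutative 3-BiHom-Poisson color algebra. -/
structure IsNC3BiHomPoissonRep (𝒜 : Γ → Submodule K g) (𝒱 : Γ → Submodule K V)
    (χ : Bicharacter K Γ) (m : g →ₗ[K] g →ₗ[K] g →ₗ[K] g) (μ : g →ₗ[K] g →ₗ[K] g)
    (α β : g →ₗ[K] g) (ρ : g →ₗ[K] g →ₗ[K] V →ₗ[K] V)
    (l r : g →ₗ[K] V →ₗ[K] V) (αV βV : V →ₗ[K] V) : Prop where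
  bimod : IsAssocColorBimodule 𝒜 𝒱 χ μ α β l r αV βV
  lierep : Is3BiHomLieRep 𝒜 𝒱 χ m α β ρ αV βV
  comp1 : ∀ a b c, ∀ x ∈ 𝒜 a, ∀ y ∈ 𝒜 b, ∀ z ∈ 𝒜 c,
    ρ (α (β x)) (α (β y)) ∘ₗ l z
      = l (m (β x) (β y) z) ∘ₗ βV + χ.ε (a + b) c • (l (β z) ∘ₗ ρ (α x) (α y))
  comp2 : ∀ a b c, ∀ x ∈ 𝒜 a, ∀ y ∈ 𝒜 b, ∀ z ∈ 𝒜 c,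
    ρ (α (β x)) (α (β y)) ∘ₗ r z
      = χ.ε (a + b) c • (r (β z) ∘ₗ ρ (β x) (β y)) + r (m (α x) (α y) z) ∘ₗ βV
  comp3 : ∀ a b c, ∀ x ∈ 𝒜 a, ∀ y ∈ 𝒜 b, ∀ z ∈ 𝒜 c,
    ρ (α (β x)) (μ (β y) (β z)) ∘ₗ (αV ∘ₗ αV ∘ₗ βV)
      = χ.ε (a + b) c • (r (α (β z)) ∘ₗ ρ x (β (β y)) ∘ₗ (αV ∘ₗ βV))
        + χ.ε a b • (l (α (β y)) ∘ₗ ρ (α x) (β z) ∘ₗ (αV ∘ₗ αV))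

/-- The 3-BiHom-ε-commutator of a ternary product, on homogeneous elements of
degrees `a`, `b`, `c`. -/
def preC (χ : Bicharacter K Γ) (m : g →ₗ[K] g →ₗ[K] g →ₗ[K] g)
    (α β : g ≃ₗ[K] g) (a b c : Γ) (x y z : g) : g :=
  m x y z - χ.ε b c • m x (β (α.symm z)) (α (β.symm y))
    + χ.ε a (b + c) • m y (β (α.symm z)) (α (β.symm x))

/-- A 3-BiHom-pre-Lie color algebra structure (with bijective structure maps). -/
structure Is3BiHomPreLieColor (𝒜 : Γ → Submodule K g) (χ : Bicharacter K Γ)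
    (m : g →ₗ[K] g →ₗ[K] g →ₗ[K] g) (α β : g ≃ₗ[K] g) : Prop where
  bracket_even : ∀ a b c, ∀ x ∈ 𝒜 a, ∀ y ∈ 𝒜 b, ∀ z ∈ 𝒜 c, m x y z ∈ 𝒜 (a + b + c)
  alpha_even : ∀ a, ∀ x ∈ 𝒜 a, α x ∈ 𝒜 a
  beta_even : ∀ a, ∀ x ∈ 𝒜 a, β x ∈ 𝒜 a
  comm : ∀ x, α (β x) = β (α x)
  mult_alpha : ∀ a b c, ∀ x ∈ 𝒜 a, ∀ y ∈ 𝒜 b, ∀ z ∈ 𝒜 c,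
    α (m x y z) = m (α x) (α y) (α z)
  mult_beta : ∀ a b c, ∀ x ∈ 𝒜 a, ∀ y ∈ 𝒜 b, ∀ z ∈ 𝒜 c,
    β (m x y z) = m (β x) (β y) (β z)
  skew : ∀ a b c, ∀ x ∈ 𝒜 a, ∀ y ∈ 𝒜 b, ∀ z ∈ 𝒜 c,
    m (β x) (β y) (α z) = -(χ.ε a b • m (β y) (β x) (α z))
  identity3 : ∀ a₁ a₂ a₃ a₄ a₅, ∀ x₁ ∈ 𝒜 a₁, ∀ x₂ ∈ 𝒜 a₂, ∀ x₃ ∈ 𝒜 a₃,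
      ∀ x₄ ∈ 𝒜 a₄, ∀ x₅ ∈ 𝒜 a₅,
    m (α (β x₄)) (α (β x₅)) (m x₁ x₂ x₃)
      = m (preC χ m α β a₄ a₅ a₁ (β x₄) (β x₅) x₁) (β x₂) (β x₃)
        + χ.ε a₁ (a₄ + a₅) • m (β x₁) (preC χ m α β a₄ a₅ a₂ (β x₄) (β x₅) x₂) (β x₃)
        + χ.ε (a₁ + a₂) (a₄ + a₅) • m (β x₁) (β x₂) (m (α x₄) (α x₅) x₃)
  identity4 : ∀ a₁ a₂ a₃ a₄ a₅, ∀ x₁ ∈ 𝒜 a₁, ∀ x₂ ∈ 𝒜 a₂, ∀ x₃ ∈ 𝒜 a₃,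
      ∀ x₄ ∈ 𝒜 a₄, ∀ x₅ ∈ 𝒜 a₅,
    m (preC χ m α β a₄ a₅ a₁ (β x₄) (β x₅) x₁) (β x₂) (β x₃)
      = χ.ε a₄ (a₁ + a₅) • m (α (β x₅)) (β x₁) (m (α x₄) x₂ x₃)
        + χ.ε a₁ (a₄ + a₅) • m (β x₁) (α (β x₄)) (m (α x₅) x₂ x₃)
        + m (α (β x₄)) (α (β x₅)) (m x₁ x₂ x₃)

/-- A BiHom-dendriform color algebra structure. -/
structure IsBiHomDendriformColor (𝒜 : Γ → Submodule K g) (χ : Bicharacter K Γ)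
    (pl pr : g →ₗ[K] g →ₗ[K] g) (α β : g →ₗ[K] g) : Prop where
  pl_even : ∀ a b, ∀ x ∈ 𝒜 a, ∀ y ∈ 𝒜 b, pl x y ∈ 𝒜 (a + b)
  pr_even : ∀ a b, ∀ x ∈ 𝒜 a, ∀ y ∈ 𝒜 b, pr x y ∈ 𝒜 (a + b)
  alpha_even : ∀ a, ∀ x ∈ 𝒜 a, α x ∈ 𝒜 a
  beta_even : ∀ a, ∀ x ∈ 𝒜 a, β x ∈ 𝒜 a
  comm : ∀ x, α (β x) = β (α x)
  alpha_pl : ∀ a b, ∀ x ∈ 𝒜 a, ∀ y ∈ 𝒜 b, α (pl x y) = pl (α x) (α y)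
  beta_pl : ∀ a b, ∀ x ∈ 𝒜 a, ∀ y ∈ 𝒜 b, β (pl x y) = pl (β x) (β y)
  alpha_pr : ∀ a b, ∀ x ∈ 𝒜 a, ∀ y ∈ 𝒜 b, α (pr x y) = pr (α x) (α y)
  beta_pr : ∀ a b, ∀ x ∈ 𝒜 a, ∀ y ∈ 𝒜 b, β (pr x y) = pr (β x) (β y)
  ax1 : ∀ a b c, ∀ x ∈ 𝒜 a, ∀ y ∈ 𝒜 b, ∀ z ∈ 𝒜 c,
    pl (pl x y) (β z) = pl (α x) (pl y z + pr y z)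
  ax2 : ∀ a b c, ∀ x ∈ 𝒜 a, ∀ y ∈ 𝒜 b, ∀ z ∈ 𝒜 c,
    pl (pr x y) (β z) = pr (α x) (pl y z)
  ax3 : ∀ a b c, ∀ x ∈ 𝒜 a, ∀ y ∈ 𝒜 b, ∀ z ∈ 𝒜 c,
    pr (α x) (pr y z) = pr (pl x y + pr x y) (β z)

/-- A noncommutative 3-BiHom-pre-Poisson color algebra structure. -/
structure IsNC3BiHomPrePoissonColor (𝒜 : Γ → Submodule K g) (χ : Bicharacter K Γ)
    (m : g →ₗ[K] g →ₗ[K] g →ₗ[K] g) (pl pr : g →ₗ[K] g →ₗ[K] g)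
    (α β : g ≃ₗ[K] g) : Prop where
  prelie : Is3BiHomPreLieColor 𝒜 χ m α β
  dend : IsBiHomDendriformColor 𝒜 χ pl pr α.toLinearMap β.toLinearMap
  comp1 : ∀ a b c d, ∀ x ∈ 𝒜 a, ∀ y ∈ 𝒜 b, ∀ z ∈ 𝒜 c, ∀ t ∈ 𝒜 d,
    m (α (β (β x))) (α (β (β y))) (pl z (α t))
        - pl (m (β (β x)) (β (β y)) z) (α (β t))
      = χ.ε c (a + b) •
          pl (β z)
            (m (α (β x)) (α (β y)) (α t) - χ.ε b d • m (α (β x)) (β t) (α (α y))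
              + χ.ε a (b + d) • m (α (β y)) (β t) (α (α x)))
  comp2 : ∀ a b c d, ∀ x ∈ 𝒜 a, ∀ y ∈ 𝒜 b, ∀ z ∈ 𝒜 c, ∀ t ∈ 𝒜 d,
    m (α (β x)) (α (α (β y))) (pr (α z) t)
        - χ.ε (a + b) c • pr (α (β z)) (m (α x) (α (α y)) t)
      = pr (m (β x) (α (β y)) (α z) - χ.ε b c • m (β x) (β z) (α (α y))
            + χ.ε a (b + c) • m (α (β y)) (β z) (α x)) (β t)
  comp3 : ∀ a b c d, ∀ x ∈ 𝒜 a, ∀ y ∈ 𝒜 b, ∀ z ∈ 𝒜 c, ∀ t ∈ 𝒜 d,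
    m (α (β x)) (β (pl y z)) (α (α (β t))) + m (α (β x)) (β (pr y z)) (α (α (β t)))
      = χ.ε a b • pr (α (β y)) (m (α x) (β z) (α (α t)))
        + χ.ε c d • pl (m (β x) (β y) (α (β t))) (α (β z))

/-- a Rota-Baxter operator of weight zero on a BiHom-associative
color algebra induces a new BiHom-associative color algebra structure. -/
theorem rotaBaxter_induced_BiHom_assoc
    (𝒜 : Γ → Submodule K g) (χ : Bicharacter K Γ)
    (μ : g →ₗ[K] g →ₗ[K] g) (α β : g →ₗ[K] g)
    (halg : IsBiHomAssocColor 𝒜 χ μ α β)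
    (R : g →ₗ[K] g)
    (hRe : ∀ a, ∀ x ∈ 𝒜 a, R x ∈ 𝒜 a)
    (hRα : ∀ x, R (α x) = α (R x)) (hRβ : ∀ x, R (β x) = β (R x))
    (hRB : ∀ a b, ∀ x ∈ 𝒜 a, ∀ y ∈ 𝒜 b,
      μ (R x) (R y) = R (μ (R x) y + μ x (R y)))
    (μR : g →ₗ[K] g →ₗ[K] g)
    (hμR : ∀ x y, μR x y = μ (R x) y + μ x (R y)) :
    IsBiHomAssocColor 𝒜 χ μR α β := by
  refine ⟨?_, halg.alpha_even, halg.beta_even, halg.comm, ?_, ?_, ?_⟩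
  · intro a b x hx y hy
    rw [hμR]
    exact (𝒜 (a + b)).add_mem (halg.mu_even a b _ (hRe a x hx) y hy)
      (halg.mu_even a b x hx _ (hRe b y hy))
  · intro a b x hx y hy
    rw [hμR, hμR, hRα, hRα, halg.mult_alpha a b _ (hRe a x hx) y hy,
      halg.mult_alpha a b x hx _ (hRe b y hy), map_add]
  · intro a b x hx y hy
    rw [hμR, hμR, hRβ, hRβ, halg.mult_beta a b _ (hRe a x hx) y hy,
      halg.mult_beta a b x hx _ (hRe b y hy), map_add]
  · intro a b c x hx y hy z hz
    have h1 := halg.assoc a b c _ (hRe a x hx) _ (hRe b y hy) z hz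
    have h2 := halg.assoc a b c _ (hRe a x hx) y hy _ (hRe c z hz)
    have h3 := halg.assoc a b c x hx _ (hRe b y hy) _ (hRe c z hz)
    rw [hμR (α x), hμR _ (β z), hμR y z, hμR x y, ← hRB b c y hy z hz,
      ← hRB a b x hx y hy, hRα, hRβ, map_add, map_add, LinearMap.add_apply,
      h1, h2, h3, add_assoc]
end

section
/- Let (g, [·,·,·], ε) be a 3-Lie color algebra and let α, β : g → g be two even commuting algebra morphisms (α([x,y,z]) = [α(x),α(y),α(z)], β([x,y,z]) = [β(x),β(y),β(z)], α∘β = β∘α). Then (g, [·,·,·]_{α,β}, ε, α, β) is a multiplicative 3-BiHom-Lie color algebra, where [x,y,z]_{α,β} = [α(x), α(y), β(z)] for all homogeneous x,y,z ∈ g. -/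
variable {K : Type*} [Field K] {Γ : Type*} [AddCommGroup Γ]
variable {g : Type*} [AddCommGroup g] [Module K g]
variable {V : Type*} [AddCommGroup V] [Module K V]

/-- twisting a 3-Lie color algebra by two commuting even algebra
morphisms yields a multiplicative 3-BiHom-Lie color algebra. -/
theorem twist_3Lie_color
    (𝒜 : Γ → Submodule K g) (χ : Bicharacter K Γ)
    (m : g →ₗ[K] g →ₗ[K] g →ₗ[K] g)
    (h3 : Is3LieColor 𝒜 χ m)
    (α β : g →ₗ[K] g)
    (hαe : ∀ a, ∀ x ∈ 𝒜 a, α x ∈ 𝒜 a) (hβe : ∀ a, ∀ x ∈ 𝒜 a, β x ∈ 𝒜 a)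
    (hcomm : ∀ x, α (β x) = β (α x))
    (hαm : ∀ x y z, α (m x y z) = m (α x) (α y) (α z))
    (hβm : ∀ x y z, β (m x y z) = m (β x) (β y) (β z))
    (m' : g →ₗ[K] g →ₗ[K] g →ₗ[K] g)
    (hm' : ∀ x y z, m' x y z = m (α x) (α y) (β z)) :
    IsMult3BiHomLieColor 𝒜 χ m' α β := by
  have hc : ∀ x, β (α x) = α (β x) := fun x => (hcomm x).symm
  refine
    { bracket_even := ?_, alpha_even := hαe, beta_even := hβe, skew1 := ?_, skew2 := ?_,
      jacobi := ?_, comm := hcomm, mult_alpha := ?_, mult_beta := ?_ }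
  · intro a b c x hx y hy z hz
    rw [hm']
    exact h3.bracket_even a b c _ (hαe _ _ hx) _ (hαe _ _ hy) _ (hβe _ _ hz)
  · intro a b c x hx y hy z hz
    simp only [hm', hc]
    exact h3.skew1 a b c _ (hαe _ _ (hβe _ _ hx)) _ (hαe _ _ (hβe _ _ hy))
      _ (hαe _ _ (hβe _ _ hz))
  · intro a b c x hx y hy z hz
    simp only [hm', hc]
    exact h3.skew2 a b c _ (hαe _ _ (hβe _ _ hx)) _ (hαe _ _ (hβe _ _ hy))
      _ (hαe _ _ (hβe _ _ hz))
  · intro a b c d e x hx y hy z hz u hu v hv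
    simp only [hm', hβm, hc]
    have key : ∀ a, ∀ x ∈ 𝒜 a, α (β (β x)) ∈ 𝒜 a :=
      fun a x hx => hαe _ _ (hβe _ _ (hβe _ _ hx))
    replace hx := key _ _ hx
    replace hy := key _ _ hy
    replace hz := key _ _ hz
    replace hu := key _ _ hu
    replace hv := key _ _ hv
    generalize α (β (β x)) = X at *
    generalize α (β (β y)) = Y at *
    generalize α (β (β z)) = Z at *
    generalize α (β (β u)) = U at *
    generalize α (β (β v)) = W at *
    have h1 := h3.bracket_even _ _ _ _ hx _ hy _ hz
    have h2 := h3.bracket_even _ _ _ _ hx _ hy _ hu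
    rw [h3.fund a b c d e X hx Y hy Z hz U hu W hv,
      h3.skew1 _ _ _ _ h1 _ hu _ hv, h3.skew2 _ _ _ _ hu _ h1 _ hv,
      h3.skew2 _ _ _ _ hz _ h2 _ hv]
    simp only [χ.add_left, χ.add_right]
    module
  · intro a b c x hx y hy z hz
    simp only [hm', hαm, hc]
  · intro a b c x hx y hy z hz
    simp only [hm', hβm, hc]
end

section
/- Let R : g → g be a Rota-Baxter operator of weight zero on a 3-BiHom-Lie color algebra (g, [·,·,·], ε, α, β). Then the even trilinear map [x,y,z]_R = [R(x),R(y),z] + [R(x),y,R(z)] + [x,R(y),R(z)] defines a 3-BiHom-Lie color algebra structure (g, [·,·,·]_R, ε, α, β) on g. -/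
variable {K : Type*} [Field K] {Γ : Type*} [AddCommGroup Γ]
variable {g : Type*} [AddCommGroup g] [Module K g]
variable {V : Type*} [AddCommGroup V] [Module K V]

/-- a Rota-Baxter operator of weight zero on a 3-BiHom-Lie color
algebra induces a new 3-BiHom-Lie color algebra structure. -/
theorem rotaBaxter_induced_3BiHomLie
    (𝒜 : Γ → Submodule K g) (χ : Bicharacter K Γ)
    (m : g →ₗ[K] g →ₗ[K] g →ₗ[K] g) (α β : g →ₗ[K] g)
    (hLie : Is3BiHomLieColor 𝒜 χ m α β)
    (R : g →ₗ[K] g)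
    (hRe : ∀ a, ∀ x ∈ 𝒜 a, R x ∈ 𝒜 a)
    (hRα : ∀ x, R (α x) = α (R x)) (hRβ : ∀ x, R (β x) = β (R x))
    (hRB : ∀ a b c, ∀ x ∈ 𝒜 a, ∀ y ∈ 𝒜 b, ∀ z ∈ 𝒜 c,
      m (R x) (R y) (R z)
        = R (m (R x) (R y) z + m (R x) y (R z) + m x (R y) (R z)))
    (mR : g →ₗ[K] g →ₗ[K] g →ₗ[K] g)
    (hmR : ∀ x y z, mR x y z = m (R x) (R y) z + m (R x) y (R z) + m x (R y) (R z)) :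
    Is3BiHomLieColor 𝒜 χ mR α β := by
  have hα := hLie.alpha_even
  have hβ := hLie.beta_even
  -- `R` intertwines the new bracket with the old one
  have key : ∀ a b c, ∀ x ∈ 𝒜 a, ∀ y ∈ 𝒜 b, ∀ z ∈ 𝒜 c,
      R (mR (β x) (β y) (α z)) = m (β (R x)) (β (R y)) (α (R z)) := by
    intro a b c x hx y hy z hz
    rw [hmR, ← hRB a b c _ (hβ a x hx) _ (hβ b y hy) _ (hα c z hz), hRβ, hRβ, hRα]
  refine ⟨?_, hα, hβ, ?_, ?_, ?_⟩
  · intro a b c x hx y hy z hz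
    rw [hmR]
    exact add_mem (add_mem
      (hLie.bracket_even a b c _ (hRe a x hx) _ (hRe b y hy) _ hz)
      (hLie.bracket_even a b c _ (hRe a x hx) _ hy _ (hRe c z hz)))
      (hLie.bracket_even a b c _ hx _ (hRe b y hy) _ (hRe c z hz))
  · intro a b c x hx y hy z hz
    simp only [hmR, hRα, hRβ]
    linear_combination (norm := module)
      hLie.skew1 a b c _ (hRe a x hx) _ (hRe b y hy) _ hz
      + hLie.skew1 a b c _ (hRe a x hx) _ hy _ (hRe c z hz)
      + hLie.skew1 a b c _ hx _ (hRe b y hy) _ (hRe c z hz)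
  · intro a b c x hx y hy z hz
    simp only [hmR, hRα, hRβ]
    linear_combination (norm := module)
      hLie.skew2 a b c _ (hRe a x hx) _ (hRe b y hy) _ hz
      + hLie.skew2 a b c _ (hRe a x hx) _ hy _ (hRe c z hz)
      + hLie.skew2 a b c _ hx _ (hRe b y hy) _ (hRe c z hz)
  · intro a b c d e x hx y hy z hz u hu v hv
    have hx' := hRe a x hx
    have hy' := hRe b y hy
    have hz' := hRe c z hz
    have hu' := hRe d u hu
    have hv' := hRe e v hv
    have j1 := hLie.jacobi a b c d e _ hx _ hy' _ hz' _ hu' _ hv'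
    have j2 := hLie.jacobi a b c d e _ hx' _ hy _ hz' _ hu' _ hv'
    have j3 := hLie.jacobi a b c d e _ hx' _ hy' _ hz _ hu' _ hv'
    have j4 := hLie.jacobi a b c d e _ hx' _ hy' _ hz' _ hu _ hv'
    have j5 := hLie.jacobi a b c d e _ hx' _ hy' _ hz' _ hu' _ hv
    have expand : ∀ p q w, mR (β (β p)) (β (β q)) w
        = m (β (β (R p))) (β (β (R q))) w + m (β (β (R p))) (β (β q)) (R w)
          + m (β (β p)) (β (β (R q))) (R w) := by
      intro p q w
      simp only [hmR, hRβ]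
    rw [expand x y, expand u v, expand z v, expand z u,
      key c d e z hz u hu v hv, key a b c x hx y hy z hz,
      key a b d x hx y hy u hu, key a b e x hx y hy v hv]
    simp only [hmR, hRα, hRβ, map_add]
    linear_combination (norm := module) j1 + j2 + j3 + j4 + j5
end

section
/- Let (g, {·,·,·}, μ, ε) be a noncommutative 3-Poisson color algebra and let α, β : g → g be two even commuting algebra morphisms for both operations (α∘β = β∘α, α and β preserve μ and {·,·,·}). Then (g, {·,·,·}_{α,β}, μ_{α,β}, ε, α, β) is a noncommutative 3-BiHom-Poisson color algebra, where μ_{α,β}(x,y) = μ(α(x), β(y)) and {x,y,z}_{α,β} = {α(x), α(y), β(z)} for all homogeneous x,y,z ∈ g. -/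
variable {K : Type*} [Field K] {Γ : Type*} [AddCommGroup Γ]
variable {g : Type*} [AddCommGroup g] [Module K g]
variable {V : Type*} [AddCommGroup V] [Module K V]

/-- twisting a noncommutative 3-Poisson color algebra by two even
commuting algebra morphisms yields a noncommutative 3-BiHom-Poisson color
algebra. -/
theorem twist_nc3Poisson
    (𝒜 : Γ → Submodule K g) (χ : Bicharacter K Γ)
    (m : g →ₗ[K] g →ₗ[K] g →ₗ[K] g) (μ : g →ₗ[K] g →ₗ[K] g)
    (hassoc : IsBiHomAssocColor 𝒜 χ μ LinearMap.id LinearMap.id)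
    (hlie : Is3LieColor 𝒜 χ m)
    (hleib : ∀ a b c d : Γ, ∀ x ∈ 𝒜 a, ∀ y ∈ 𝒜 b, ∀ z ∈ 𝒜 c, ∀ t ∈ 𝒜 d,
      m x y (μ z t) = μ (m x y z) t + χ.ε (a + b) c • μ z (m x y t))
    (α β : g →ₗ[K] g)
    (hαe : ∀ a, ∀ x ∈ 𝒜 a, α x ∈ 𝒜 a) (hβe : ∀ a, ∀ x ∈ 𝒜 a, β x ∈ 𝒜 a)
    (hcomm : ∀ x, α (β x) = β (α x))
    (hαμ : ∀ x y, α (μ x y) = μ (α x) (α y))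
    (hβμ : ∀ x y, β (μ x y) = μ (β x) (β y))
    (hαm : ∀ x y z, α (m x y z) = m (α x) (α y) (α z))
    (hβm : ∀ x y z, β (m x y z) = m (β x) (β y) (β z))
    (μ' : g →ₗ[K] g →ₗ[K] g) (hμ' : ∀ x y, μ' x y = μ (α x) (β y))
    (m' : g →ₗ[K] g →ₗ[K] g →ₗ[K] g)
    (hm' : ∀ x y z, m' x y z = m (α x) (α y) (β z)) :
    IsNC3BiHomPoissonColor 𝒜 χ m' μ' α β := by
  have hass : ∀ a b c, ∀ x ∈ 𝒜 a, ∀ y ∈ 𝒜 b, ∀ z ∈ 𝒜 c, μ x (μ y z) = μ (μ x y) z :=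
    hassoc.assoc
  -- the Jacobi form of the fundamental identity
  have hjac : ∀ a b c d e, ∀ x ∈ 𝒜 a, ∀ y ∈ 𝒜 b, ∀ z ∈ 𝒜 c, ∀ u ∈ 𝒜 d, ∀ v ∈ 𝒜 e,
      m x y (m z u v)
        = χ.ε (a + b + c) (d + e) • m u v (m x y z)
          - (χ.ε (a + b) (c + e) * χ.ε d e) • m z v (m x y u)
          + χ.ε (a + b) (c + d) • m z u (m x y v) := by
    intro a b c d e x hx y hy z hz u hu v hv
    have h1 := hlie.bracket_even a b c x hx y hy z hz
    have h2 := hlie.bracket_even a b d x hx y hy u hu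
    rw [hlie.fund a b c d e x hx y hy z hz u hu v hv,
      hlie.skew1 _ _ _ _ h1 u hu v hv, hlie.skew2 _ _ _ u hu _ h1 v hv,
      hlie.skew2 _ _ _ z hz _ h2 v hv]
    simp only [χ.add_left, χ.add_right]
    module
  have hab : ∀ a, ∀ x ∈ 𝒜 a, β (α x) ∈ 𝒜 a := fun a x hx => hβe a _ (hαe a x hx)
  refine ⟨⟨?_, hαe, hβe, hcomm, ?_, ?_, ?_⟩, ⟨?_, hαe, hβe, ?_, ?_, ?_⟩, ?_⟩
  · intro a b x hx y hy
    rw [hμ']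
    exact hassoc.mu_even a b _ (hαe a x hx) _ (hβe b y hy)
  · intro a b x _ y _
    simp only [hμ', hαμ, hcomm]
  · intro a b x _ y _
    simp only [hμ', hβμ, hcomm]
  · intro a b c x hx y hy z hz
    simp only [hμ', hαμ, hβμ, hcomm]
    exact hass a b c _ (hαe a _ (hαe a x hx)) _ (hab b y hy) _ (hβe c _ (hβe c z hz))
  · intro a b c x hx y hy z hz
    rw [hm']
    exact hlie.bracket_even a b c _ (hαe a x hx) _ (hαe b y hy) _ (hβe c z hz)
  · intro a b c x hx y hy z hz
    simp only [hm', hcomm]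
    exact hlie.skew1 a b c _ (hab a x hx) _ (hab b y hy) _ (hab c z hz)
  · intro a b c x hx y hy z hz
    simp only [hm', hcomm]
    exact hlie.skew2 a b c _ (hab a x hx) _ (hab b y hy) _ (hab c z hz)
  · intro a b c d e x hx y hy z hz u hu v hv
    simp only [hm', hβm, hcomm]
    exact hjac a b c d e _ (hβe a _ (hab a x hx)) _ (hβe b _ (hab b y hy))
      _ (hβe c _ (hab c z hz)) _ (hβe d _ (hab d u hu)) _ (hβe e _ (hab e v hv))
  · intro a b c d x hx y hy z hz t ht
    simp only [hm', hμ', hαm, hβm, hβμ, hcomm]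
    exact hleib a b c d _ (hab a _ (hαe a x hx)) _ (hab b _ (hαe b y hy)) _ (hab c z hz)
      _ (hβe d _ (hβe d t ht))
end

section
/- Let R : g → g be a Rota-Baxter operator of weight zero on a noncommutative 3-BiHom-Poisson color algebra (g, {·,·,·}, μ, ε, α, β), i.e. R is an even linear map commuting with α and β that is simultaneously a Rota-Baxter operator of weight zero on (g, μ, ε, α, β) and on (g, {·,·,·}, ε, α, β). Then (g, {·,·,·}_R, μ_R, ε, α, β) is a noncommutative 3-BiHom-Poisson color algebra, where μ_R(x,y) = μ(R(x),y) + μ(x,R(y)) and {x,y,z}_R = [R(x),R(y),z] + [R(x),y,R(z)] + [x,R(y),R(z)] (brackets taken with {·,·,·}) for all homogeneous x,y,z. -/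
variable {K : Type*} [Field K] {Γ : Type*} [AddCommGroup Γ]
variable {g : Type*} [AddCommGroup g] [Module K g]
variable {V : Type*} [AddCommGroup V] [Module K V]

/-- a Rota-Baxter operator of weight zero on a noncommutative
3-BiHom-Poisson color algebra induces a new noncommutative 3-BiHom-Poisson
color algebra structure. -/
theorem rotaBaxter_induced_nc3BiHomPoisson
    (𝒜 : Γ → Submodule K g) (χ : Bicharacter K Γ)
    (m : g →ₗ[K] g →ₗ[K] g →ₗ[K] g) (μ : g →ₗ[K] g →ₗ[K] g) (α β : g →ₗ[K] g)
    (hP : IsNC3BiHomPoissonColor 𝒜 χ m μ α β)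
    (R : g →ₗ[K] g)
    (hRe : ∀ a, ∀ x ∈ 𝒜 a, R x ∈ 𝒜 a)
    (hRα : ∀ x, R (α x) = α (R x)) (hRβ : ∀ x, R (β x) = β (R x))
    (hRBμ : ∀ a b, ∀ x ∈ 𝒜 a, ∀ y ∈ 𝒜 b,
      μ (R x) (R y) = R (μ (R x) y + μ x (R y)))
    (hRBm : ∀ a b c, ∀ x ∈ 𝒜 a, ∀ y ∈ 𝒜 b, ∀ z ∈ 𝒜 c,
      m (R x) (R y) (R z)
        = R (m (R x) (R y) z + m (R x) y (R z) + m x (R y) (R z)))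
    (μR : g →ₗ[K] g →ₗ[K] g)
    (hμR : ∀ x y, μR x y = μ (R x) y + μ x (R y))
    (mR : g →ₗ[K] g →ₗ[K] g →ₗ[K] g)
    (hmR : ∀ x y z, mR x y z = m (R x) (R y) z + m (R x) y (R z) + m x (R y) (R z)) :
    IsNC3BiHomPoissonColor 𝒜 χ mR μR α β := by
  have hA := hP.assoc
  have hL := hP.lie
  have ae := hA.alpha_even
  have be := hA.beta_even
  have hRμR : ∀ a b, ∀ x ∈ 𝒜 a, ∀ y ∈ 𝒜 b, R (μR x y) = μ (R x) (R y) := by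
    intro a b x hx y hy
    rw [hμR, hRBμ a b x hx y hy]
  have hRmR : ∀ a b c, ∀ x ∈ 𝒜 a, ∀ y ∈ 𝒜 b, ∀ z ∈ 𝒜 c,
      R (mR x y z) = m (R x) (R y) (R z) := by
    intro a b c x hx y hy z hz
    rw [hmR, hRBm a b c x hx y hy z hz]
  -- the nested bracket is the sum of the five terms in which exactly one entry lacks `R`
  have hnest : ∀ a b c d e, ∀ x ∈ 𝒜 a, ∀ y ∈ 𝒜 b, ∀ z ∈ 𝒜 c, ∀ u ∈ 𝒜 d, ∀ v ∈ 𝒜 e,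
      mR (β (β x)) (β (β y)) (mR (β z) (β u) (α v))
        = m (β (β (R x))) (β (β (R y))) (m (β (R z)) (β (R u)) (α v))
        + m (β (β (R x))) (β (β (R y))) (m (β (R z)) (β u) (α (R v)))
        + m (β (β (R x))) (β (β (R y))) (m (β z) (β (R u)) (α (R v)))
        + m (β (β (R x))) (β (β y)) (m (β (R z)) (β (R u)) (α (R v)))
        + m (β (β x)) (β (β (R y))) (m (β (R z)) (β (R u)) (α (R v))) := by
    intro a b c d e x hx y hy z hz u hu v hv
    rw [hmR (β (β x)), hRmR c d e _ (be _ _ hz) _ (be _ _ hu) _ (ae _ _ hv), hmR]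
    simp only [hRα, hRβ, map_add]
  refine ⟨⟨?_, ae, be, hA.comm, ?_, ?_, ?_⟩, ⟨?_, ae, be, ?_, ?_, ?_⟩, ?_⟩
  · intro a b x hx y hy
    rw [hμR]
    exact add_mem (hA.mu_even _ _ _ (hRe _ _ hx) _ hy) (hA.mu_even _ _ _ hx _ (hRe _ _ hy))
  · intro a b x hx y hy
    rw [hμR, hμR, hRα, hRα, map_add, hA.mult_alpha _ _ _ (hRe _ _ hx) _ hy,
      hA.mult_alpha _ _ _ hx _ (hRe _ _ hy)]
  · intro a b x hx y hy
    rw [hμR, hμR, hRβ, hRβ, map_add, hA.mult_beta _ _ _ (hRe _ _ hx) _ hy,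
      hA.mult_beta _ _ _ hx _ (hRe _ _ hy)]
  · intro a b c x hx y hy z hz
    rw [hμR (α x), hμR _ (β z), hRμR _ _ _ hx _ hy, hRμR _ _ _ hy _ hz, hμR, hμR, hRα, hRβ]
    simp only [map_add, LinearMap.add_apply]
    rw [hA.assoc _ _ _ _ (hRe _ _ hx) _ (hRe _ _ hy) _ hz,
      hA.assoc _ _ _ _ (hRe _ _ hx) _ hy _ (hRe _ _ hz),
      hA.assoc _ _ _ _ hx _ (hRe _ _ hy) _ (hRe _ _ hz)]
    abel
  · intro a b c x hx y hy z hz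
    rw [hmR]
    exact add_mem (add_mem
      (hL.bracket_even _ _ _ _ (hRe _ _ hx) _ (hRe _ _ hy) _ hz)
      (hL.bracket_even _ _ _ _ (hRe _ _ hx) _ hy _ (hRe _ _ hz)))
      (hL.bracket_even _ _ _ _ hx _ (hRe _ _ hy) _ (hRe _ _ hz))
  · intro a b c x hx y hy z hz
    rw [hmR, hmR]
    simp only [hRα, hRβ]
    rw [hL.skew1 _ _ _ _ (hRe _ _ hx) _ (hRe _ _ hy) _ hz,
      hL.skew1 _ _ _ _ (hRe _ _ hx) _ hy _ (hRe _ _ hz),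
      hL.skew1 _ _ _ _ hx _ (hRe _ _ hy) _ (hRe _ _ hz)]
    module
  · intro a b c x hx y hy z hz
    rw [hmR, hmR]
    simp only [hRα, hRβ]
    rw [hL.skew2 _ _ _ _ (hRe _ _ hx) _ (hRe _ _ hy) _ hz,
      hL.skew2 _ _ _ _ (hRe _ _ hx) _ hy _ (hRe _ _ hz),
      hL.skew2 _ _ _ _ hx _ (hRe _ _ hy) _ (hRe _ _ hz)]
    module
  · intro a b c d e x hx y hy z hz u hu v hv
    have Rx := hRe _ _ hx
    have Ry := hRe _ _ hy
    have Rz := hRe _ _ hz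
    have Ru := hRe _ _ hu
    have Rv := hRe _ _ hv
    rw [hnest _ _ _ _ _ _ hx _ hy _ hz _ hu _ hv, hnest _ _ _ _ _ _ hu _ hv _ hx _ hy _ hz,
      hnest _ _ _ _ _ _ hz _ hv _ hx _ hy _ hu, hnest _ _ _ _ _ _ hz _ hu _ hx _ hy _ hv,
      hL.jacobi _ _ _ _ _ _ Rx _ Ry _ Rz _ Ru _ hv,
      hL.jacobi _ _ _ _ _ _ Rx _ Ry _ Rz _ hu _ Rv,
      hL.jacobi _ _ _ _ _ _ Rx _ Ry _ hz _ Ru _ Rv,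
      hL.jacobi _ _ _ _ _ _ Rx _ hy _ Rz _ Ru _ Rv,
      hL.jacobi _ _ _ _ _ _ hx _ Ry _ Rz _ Ru _ Rv]
    module
  · intro a b c d x hx y hy z hz t ht
    have Rx := hRe _ _ hx
    have Ry := hRe _ _ hy
    have Rz := hRe _ _ hz
    have Rt := hRe _ _ ht
    rw [hmR (α (β x)), hμR _ (β t), hμR (β z), hRμR _ _ _ hz _ ht,
      hRmR _ _ _ _ (be _ _ hx) _ (be _ _ hy) _ hz,
      hRmR _ _ _ _ (ae _ _ hx) _ (ae _ _ hy) _ ht, hμR, hmR, hmR]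
    simp only [hRα, hRβ, map_add, LinearMap.add_apply]
    rw [hP.leibniz _ _ _ _ _ Rx _ Ry _ Rz _ ht,
      hP.leibniz _ _ _ _ _ Rx _ Ry _ hz _ Rt,
      hP.leibniz _ _ _ _ _ Rx _ hy _ Rz _ Rt,
      hP.leibniz _ _ _ _ _ hx _ Ry _ Rz _ Rt]
    module
end

section
/- Let (g, {·,·,·}, ε) be a 3-pre-Lie color algebra and let α, β be two commuting even algebra automorphisms of g (bijective, preserving {·,·,·}). Then (g, {·,·,·}_{α,β}, ε, α, β) is a 3-BiHom-pre-Lie color algebra, where {x,y,z}_{α,β} = {α(x), α(y), β(z)} for all homogeneous x,y,z ∈ g. -/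
variable {K : Type*} [Field K] {Γ : Type*} [AddCommGroup Γ]
variable {g : Type*} [AddCommGroup g] [Module K g]
variable {V : Type*} [AddCommGroup V] [Module K V]

/-- twisting a 3-pre-Lie color algebra by two commuting even
algebra automorphisms yields a 3-BiHom-pre-Lie color algebra. -/
theorem twist_3preLie_color
    (𝒜 : Γ → Submodule K g) (χ : Bicharacter K Γ)
    (m : g →ₗ[K] g →ₗ[K] g →ₗ[K] g)
    (h : Is3BiHomPreLieColor 𝒜 χ m (LinearEquiv.refl K g) (LinearEquiv.refl K g))
    (α β : g ≃ₗ[K] g)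
    (hαe : ∀ a, ∀ x ∈ 𝒜 a, α x ∈ 𝒜 a) (hβe : ∀ a, ∀ x ∈ 𝒜 a, β x ∈ 𝒜 a)
    (hcomm : ∀ x, α (β x) = β (α x))
    (hαm : ∀ x y z, α (m x y z) = m (α x) (α y) (α z))
    (hβm : ∀ x y z, β (m x y z) = m (β x) (β y) (β z))
    (m' : g →ₗ[K] g →ₗ[K] g →ₗ[K] g)
    (hm' : ∀ x y z, m' x y z = m (α x) (α y) (β z)) :
    Is3BiHomPreLieColor 𝒜 χ m' α β := by
  constructor
  · intro a b c x hx y hy z hz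
    rw [hm']
    exact h.bracket_even a b c _ (hαe _ _ hx) _ (hαe _ _ hy) _ (hβe _ _ hz)
  · exact hαe
  · exact hβe
  · exact hcomm
  · intro a b c x hx y hy z hz
    simp only [hm', hαm, hcomm]
  · intro a b c x hx y hy z hz
    simp only [hm', hβm, hcomm]
  · intro a b c x hx y hy z hz
    have := h.skew a b c _ (hβe _ _ (hαe _ _ hx)) _ (hβe _ _ (hαe _ _ hy)) _
      (hβe _ _ (hαe _ _ hz))
    simpa only [hm', hcomm, LinearEquiv.refl_apply] using this
  · intro a₁ a₂ a₃ a₄ a₅ x₁ h₁ x₂ h₂ x₃ h₃ x₄ h₄ x₅ h₅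
    have := h.identity3 a₁ a₂ a₃ a₄ a₅ _ (hβe _ _ (hαe _ _ h₁)) _ (hβe _ _ (hαe _ _ h₂)) _
      (hβe _ _ (hβe _ _ h₃)) _ (hβe _ _ (hαe _ _ (hαe _ _ h₄))) _
      (hβe _ _ (hαe _ _ (hαe _ _ h₅)))
    simpa only [preC, hm', hcomm, hαm, hβm, map_add, map_sub, map_smul,
      LinearMap.add_apply, LinearMap.sub_apply, LinearMap.smul_apply,
      LinearEquiv.refl_apply, LinearEquiv.refl_symm, LinearEquiv.apply_symm_apply,
      LinearEquiv.symm_apply_apply] using this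
  · intro a₁ a₂ a₃ a₄ a₅ x₁ h₁ x₂ h₂ x₃ h₃ x₄ h₄ x₅ h₅
    have := h.identity4 a₁ a₂ a₃ a₄ a₅ _ (hβe _ _ (hαe _ _ h₁)) _ (hβe _ _ (hαe _ _ h₂)) _
      (hβe _ _ (hβe _ _ h₃)) _ (hβe _ _ (hαe _ _ (hαe _ _ h₄))) _
      (hβe _ _ (hαe _ _ (hαe _ _ h₅)))
    simpa only [preC, hm', hcomm, hαm, hβm, map_add, map_sub, map_smul,
      LinearMap.add_apply, LinearMap.sub_apply, LinearMap.smul_apply,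
      LinearEquiv.refl_apply, LinearEquiv.refl_symm, LinearEquiv.apply_symm_apply,
      LinearEquiv.symm_apply_apply] using this
end

section
/- Let (g, [·,·,·], ε, α, β) be a multiplicative 3-BiHom-Lie color algebra with α, β bijective, let (V, ρ, α_V, β_V) be a representation of g with α_V, β_V bijective, and let T : V → g be a Kupershmidt operator associated with (V, ρ, α_V, β_V). Then V carries a 3-BiHom-pre-Lie color algebra structure (V, {·,·,·}_V, ε, α_V, β_V) given by {u,v,w}_V = ρ(T(u), T(v))w for all homogeneous u,v,w ∈ V. -/
variable {K : Type*} [Field K] {Γ : Type*} [AddCommGroup Γ]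
variable {g : Type*} [AddCommGroup g] [Module K g]
variable {V : Type*} [AddCommGroup V] [Module K V]

/-- a Kupershmidt operator on a multiplicative 3-BiHom-Lie color
algebra induces a 3-BiHom-pre-Lie color algebra structure on the
representation space. -/
theorem kupershmidt_induced_3BiHomPreLie
    (𝒜 : Γ → Submodule K g) (𝒱 : Γ → Submodule K V) (χ : Bicharacter K Γ)
    (m : g →ₗ[K] g →ₗ[K] g →ₗ[K] g) (α β : g ≃ₗ[K] g)
    (ρ : g →ₗ[K] g →ₗ[K] V →ₗ[K] V) (αV βV : V ≃ₗ[K] V)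
    (hLie : IsMult3BiHomLieColor 𝒜 χ m α.toLinearMap β.toLinearMap)
    (hrep : Is3BiHomLieRep 𝒜 𝒱 χ m α.toLinearMap β.toLinearMap ρ
      αV.toLinearMap βV.toLinearMap)
    (T : V →ₗ[K] g)
    (hTe : ∀ a, ∀ v ∈ 𝒱 a, T v ∈ 𝒜 a)
    (hTα : ∀ v, α (T v) = T (αV v)) (hTβ : ∀ v, β (T v) = T (βV v))
    (hT : ∀ a b c : Γ, ∀ u ∈ 𝒱 a, ∀ v ∈ 𝒱 b, ∀ w ∈ 𝒱 c,
      m (T u) (T v) (T w)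
        = T (ρ (T u) (T v) w
            - χ.ε b c • ρ (T u) (T (αV.symm (βV w))) (αV (βV.symm v))
            + χ.ε a (b + c) • ρ (T v) (T (αV.symm (βV w))) (αV (βV.symm u))))
    (mV : V →ₗ[K] V →ₗ[K] V →ₗ[K] V)
    (hmV : ∀ u v w, mV u v w = ρ (T u) (T v) w) :
    Is3BiHomPreLieColor 𝒱 χ mV αV βV := by
  have hsymm : ∀ v, βV (αV.symm v) = αV.symm (βV v) := by
    intro v
    apply αV.injective
    have := hrep.commV (αV.symm v)
    simpa using this
  have hC : ∀ a b c : Γ, ∀ u ∈ 𝒱 a, ∀ v ∈ 𝒱 b, ∀ w ∈ 𝒱 c,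
      T (preC χ mV αV βV a b c u v w) = m (T u) (T v) (T w) := by
    intro a b c u hu v hv w hw
    rw [hT a b c u hu v hv w hw, preC]
    simp only [hmV, hsymm]
  have hαe : ∀ a, ∀ v ∈ 𝒱 a, αV v ∈ 𝒱 a := hrep.alphaV_even
  have hβe : ∀ a, ∀ v ∈ 𝒱 a, βV v ∈ 𝒱 a := hrep.betaV_even
  refine ⟨?_, hαe, hβe, hrep.commV, ?_, ?_, ?_, ?_, ?_⟩
  · intro a b c x hx y hy z hz
    rw [hmV]
    exact hrep.rho_even a b c _ (hTe a x hx) _ (hTe b y hy) z hz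
  · intro a b c x hx y hy z hz
    have h := LinearMap.congr_fun (hrep.cond1 a b _ (hTe a x hx) _ (hTe b y hy)) z
    simp only [LinearMap.comp_apply, LinearEquiv.coe_coe, hTα] at h
    rw [hmV, hmV, h]
  · intro a b c x hx y hy z hz
    have h := LinearMap.congr_fun (hrep.cond2 a b _ (hTe a x hx) _ (hTe b y hy)) z
    simp only [LinearMap.comp_apply, LinearEquiv.coe_coe, hTβ] at h
    rw [hmV, hmV, h]
  · intro a b c x hx y hy z hz
    rw [hmV, hmV, hrep.rho_skew a b _ (hTe a _ (hβe a x hx)) _ (hTe b _ (hβe b y hy))]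
    simp
  · intro a₁ a₂ a₃ a₄ a₅ x₁ h₁ x₂ h₂ x₃ h₃ x₄ h₄ x₅ h₅
    have h := LinearMap.congr_fun (hrep.cond3 a₄ a₅ a₁ a₂ _ (hTe _ _ h₄) _ (hTe _ _ h₅)
      _ (hTe _ _ h₁) _ (hTe _ _ h₂)) x₃
    simp only [LinearMap.comp_apply, LinearMap.add_apply, LinearMap.smul_apply,
      LinearEquiv.coe_coe, hTα, hTβ] at h
    simp only [hmV]
    rw [hC _ _ _ _ (hβe _ _ h₄) _ (hβe _ _ h₅) _ h₁,
      hC _ _ _ _ (hβe _ _ h₄) _ (hβe _ _ h₅) _ h₂, h]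
    abel
  · intro a₁ a₂ a₃ a₄ a₅ x₁ h₁ x₂ h₂ x₃ h₃ x₄ h₄ x₅ h₅
    have h := LinearMap.congr_fun (hrep.cond4 a₄ a₅ a₁ a₂ _ (hTe _ _ h₄) _ (hTe _ _ h₅)
      _ (hTe _ _ h₁) _ (hTe _ _ h₂)) x₃
    simp only [LinearMap.comp_apply, LinearMap.add_apply, LinearMap.smul_apply,
      LinearEquiv.coe_coe, hTα, hTβ] at h
    simp only [hmV]
    rw [hC _ _ _ _ (hβe _ _ h₄) _ (hβe _ _ h₅) _ h₁, h]
end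

section
/- Let (g, ≺, ≻, ε) be a dendriform color algebra and let α, β : g → g be two even commuting algebra homomorphisms (α(x≺y)=α(x)≺α(y), β(x≺y)=β(x)≺β(y), α(x≻y)=α(x)≻α(y), β(x≻y)=β(x)≻β(y), α∘β = β∘α). Then (g, ≺_{α,β}, ≻_{α,β}, ε, α, β) is a BiHom-dendriform color algebra, where x ≺_{α,β} y = α(x) ≺ β(y) and x ≻_{α,β} y = α(x) ≻ β(y) for all homogeneous x,y ∈ g. -/
variable {K : Type*} [Field K] {Γ : Type*} [AddCommGroup Γ]
variable {g : Type*} [AddCommGroup g] [Module K g]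
variable {V : Type*} [AddCommGroup V] [Module K V]

/-- twisting a dendriform color algebra by two even commuting
algebra homomorphisms yields a BiHom-dendriform color algebra. -/
theorem twist_dendriform_color
    (𝒜 : Γ → Submodule K g) (χ : Bicharacter K Γ)
    (pl pr : g →ₗ[K] g →ₗ[K] g)
    (h : IsBiHomDendriformColor 𝒜 χ pl pr LinearMap.id LinearMap.id)
    (α β : g →ₗ[K] g)
    (hαe : ∀ a, ∀ x ∈ 𝒜 a, α x ∈ 𝒜 a) (hβe : ∀ a, ∀ x ∈ 𝒜 a, β x ∈ 𝒜 a)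
    (hcomm : ∀ x, α (β x) = β (α x))
    (hαl : ∀ x y, α (pl x y) = pl (α x) (α y))
    (hβl : ∀ x y, β (pl x y) = pl (β x) (β y))
    (hαr : ∀ x y, α (pr x y) = pr (α x) (α y))
    (hβr : ∀ x y, β (pr x y) = pr (β x) (β y))
    (pl' pr' : g →ₗ[K] g →ₗ[K] g)
    (hpl' : ∀ x y, pl' x y = pl (α x) (β y))
    (hpr' : ∀ x y, pr' x y = pr (α x) (β y)) :
    IsBiHomDendriformColor 𝒜 χ pl' pr' α β := by
  have ha := hαe
  have hb := hβe
  refine ⟨?_, ?_, hαe, hβe, hcomm, ?_, ?_, ?_, ?_, ?_, ?_, ?_⟩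
  · intro a b x hx y hy
    rw [hpl']
    exact h.pl_even a b _ (ha a x hx) _ (hb b y hy)
  · intro a b x hx y hy
    rw [hpr']
    exact h.pr_even a b _ (ha a x hx) _ (hb b y hy)
  · intro a b x hx y hy
    simp only [hpl', hαl, hcomm]
  · intro a b x hx y hy
    simp only [hpl', hβl, hcomm]
  · intro a b x hx y hy
    simp only [hpr', hαr, hcomm]
  · intro a b x hx y hy
    simp only [hpr', hβr, hcomm]
  · intro a b c x hx y hy z hz
    have key := h.ax1 a b c _ (ha a _ (ha a x hx)) _ (hb b _ (ha b y hy)) _ (hb c _ (hb c z hz))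
    simp only [LinearMap.id_apply] at key
    simp only [hpl', hpr', hαl, hβl, hβr, hcomm, map_add] at key ⊢
    exact key
  · intro a b c x hx y hy z hz
    have key := h.ax2 a b c _ (ha a _ (ha a x hx)) _ (hb b _ (ha b y hy)) _ (hb c _ (hb c z hz))
    simp only [LinearMap.id_apply] at key
    simp only [hpl', hpr', hαr, hβl, hcomm] at key ⊢
    exact key
  · intro a b c x hx y hy z hz
    have key := h.ax3 a b c _ (ha a _ (ha a x hx)) _ (hb b _ (ha b y hy)) _ (hb c _ (hb c z hz))
    simp only [LinearMap.id_apply] at key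
    simp only [hpl', hpr', hαl, hαr, hβr, hcomm, map_add, LinearMap.add_apply] at key ⊢
    exact key
end
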